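/- arXiv:2010.02255 — 3 statements merged into one kernel-verified Lean document; each statement's English description precedes it below -/
import Mathlib

section
/- (Lemma: TD mean bias reduction.) Suppose X, X' are integrable with respect to P, Y, Y' are integrable with respect to P', γ > 0, B ≠ 0, and 0 < B'/B < 2/γ. Then |E[δ] − E[δ*]| < |E[X] − E[Y]|; that is, the mean conditional TD error E_θ[δ(θ,τ) | τ] has strictly smaller bias (in absolute value) than E_θ[Q_θ(s,a)] has as an estimator of E_M[Q_π^M(s,a)]. -/
open MeasureTheory

/-- TD mean bias reduction: if the consecutive-bias ratio `B'/B` lies in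
`(0, 2/γ)`, then the mean conditional TD error has strictly smaller bias (in
absolute value) than the value estimate. -/
theorem td_mean_bias_reduction
    {Ω Ω' : Type*} [MeasurableSpace Ω] [MeasurableSpace Ω']
    (P : Measure Ω) (P' : Measure Ω')
    [IsProbabilityMeasure P] [IsProbabilityMeasure P']
    (X X' : Ω → ℝ) (Y Y' : Ω' → ℝ) (γ r : ℝ)
    (hX : Integrable X P) (hX' : Integrable X' P)
    (hY : Integrable Y P') (hY' : Integrable Y' P')
    (hγ : 0 < γ)
    (B B' : ℝ)
    (hB : B = (∫ ω, X ω ∂P) - (∫ ω, Y ω ∂P'))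
    (hB' : B' = (∫ ω, X' ω ∂P) - (∫ ω, Y' ω ∂P'))
    (hBne : B ≠ 0)
    (hρ₀ : 0 < B' / B) (hρ₂ : B' / B < 2 / γ) :
    |(∫ ω, (γ * X' ω + r - X ω) ∂P) - (∫ ω, (γ * Y' ω + r - Y ω) ∂P')|
      < |(∫ ω, X ω ∂P) - (∫ ω, Y ω ∂P')| := by
  have key : ∀ {α : Type _} [MeasurableSpace α] (μ : Measure α) [IsProbabilityMeasure μ]
      (U U' : α → ℝ), Integrable U μ → Integrable U' μ →
      ∫ ω, (γ * U' ω + r - U ω) ∂μ = γ * (∫ ω, U' ω ∂μ) + r - ∫ ω, U ω ∂μ := by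
    intro α _ μ _ U U' hU hU'
    have h1 : Integrable (fun ω => γ * U' ω) μ := hU'.const_mul γ
    have h2 : Integrable (fun ω => γ * U' ω + r) μ := h1.add (integrable_const r)
    rw [integral_sub h2 hU, integral_add h1 (integrable_const r), integral_const_mul]
    simp
  have key' : ∫ ω, (γ * Y' ω + r - Y ω) ∂P' =
      γ * (∫ ω, Y' ω ∂P') + r - ∫ ω, Y ω ∂P' := by
    have h1 : Integrable (fun ω => γ * Y' ω) P' := hY'.const_mul γ
    have h2 : Integrable (fun ω => γ * Y' ω + r) P' := h1.add (integrable_const r)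
    rw [integral_sub h2 hY, integral_add h1 (integrable_const r), integral_const_mul]
    simp
  rw [key P X X' hX hX', key', ← hB]
  have e : γ * (∫ ω, X' ω ∂P) + r - (∫ ω, X ω ∂P)
      - (γ * (∫ ω, Y' ω ∂P') + r - ∫ ω, Y ω ∂P') = (γ * (B' / B) - 1) * B := by
    have h : (γ * (B' / B) - 1) * B = γ * B' - B := by field_simp
    rw [h, hB, hB']
    ring
  rw [e, abs_mul]
  have h2 : B' / B * γ < 2 := (lt_div_iff₀ hγ).mp hρ₂
  have h0 : 0 < γ * (B' / B) := mul_pos hγ hρ₀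
  have h1 : |γ * (B' / B) - 1| < 1 := by
    rw [abs_lt]
    constructor <;> linarith
  exact mul_lt_of_lt_one_left (abs_pos.mpr hBne) h1
end

section
/- (Existence and uniqueness of the action-value function.) There exists a unique function q : S → A → ℝ satisfying the Bellman equation T q = q; this unique fixed point is the action-value function Q_π of the policy π. -/
/-- The Bellman operator for a deterministic policy `π`:
`(T q) s a = rbar s a + γ · ∑ s', P s a s' · q s' (π s')`. -/
def bellmanOp {S A : Type*} [Fintype S] (π : S → A) (P : S → A → S → ℝ)
    (rbar : S → A → ℝ) (γ : ℝ) (q : S → A → ℝ) : S → A → ℝ :=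
  fun s a => rbar s a + γ * ∑ s', P s a s' * q s' (π s')

/-- Existence and uniqueness of the action-value function: there is a unique
fixed point of the Bellman operator. -/
theorem bellmanOp_existsUnique_fixedPoint {S A : Type*} [Fintype S] [Fintype A]
    [Nonempty S] [Nonempty A]
    (π : S → A) (P : S → A → S → ℝ) (rbar : S → A → ℝ) (γ : ℝ)
    (hP₀ : ∀ s a s', 0 ≤ P s a s')
    (hP₁ : ∀ s a, ∑ s', P s a s' = 1)
    (hγ₀ : 0 ≤ γ) (hγ₁ : γ < 1) :
    ∃! q : S → A → ℝ, bellmanOp π P rbar γ q = q := by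
  have hc : ContractingWith ⟨γ, hγ₀⟩ (bellmanOp π P rbar γ) := by
    refine ⟨by exact_mod_cast hγ₁, LipschitzWith.of_dist_le_mul fun p q => ?_⟩
    change dist _ _ ≤ γ * dist p q
    have hd : 0 ≤ γ * dist p q := mul_nonneg hγ₀ dist_nonneg
    refine (dist_pi_le_iff hd).2 fun s => (dist_pi_le_iff hd).2 fun a => ?_
    have h1 : bellmanOp π P rbar γ p s a - bellmanOp π P rbar γ q s a
        = γ * ∑ s', P s a s' * (p s' (π s') - q s' (π s')) := by
      simp only [bellmanOp, mul_sub, Finset.sum_sub_distrib]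
      ring
    rw [Real.dist_eq, h1, abs_mul, abs_of_nonneg hγ₀]
    refine mul_le_mul_of_nonneg_left ?_ hγ₀
    calc |∑ s', P s a s' * (p s' (π s') - q s' (π s'))|
        ≤ ∑ s', |P s a s' * (p s' (π s') - q s' (π s'))| := Finset.abs_sum_le_sum_abs _ _
      _ ≤ ∑ s', P s a s' * dist p q := by
          refine Finset.sum_le_sum fun s' _ => ?_
          rw [abs_mul, abs_of_nonneg (hP₀ s a s'), ← Real.dist_eq]
          exact mul_le_mul_of_nonneg_left
            ((dist_le_pi_dist (p s') (q s') (π s')).trans (dist_le_pi_dist p q s'))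
            (hP₀ s a s')
      _ = dist p q := by rw [← Finset.sum_mul, hP₁, one_mul]
  exact ⟨hc.fixedPoint, hc.fixedPoint_isFixedPt, fun q hq => hc.fixedPoint_unique hq⟩
end

section
/- (Unsolvability of the consistency system for the mean weights.) Suppose E has trivial kernel and μ does not lie in the column space of E, i.e., there is no v : Fin n → ℝ with E.mulVec v = μ. Then there is no w : Fin n → ℝ with Φ(μ, E).mulVec w = μ; that is, the linear system μ = (μ·1ᵀ + E)·w arising from the first-moment Bellman consistency conditions has no solution. -/
/-- The matrix `Φ = μ·1ᵀ + E` arising from the first-moment Bellman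
consistency conditions. -/
def PhiMat {N n : ℕ} (μ : Fin N → ℝ) (E : Matrix (Fin N) (Fin n) ℝ) :
    Matrix (Fin N) (Fin n) ℝ :=
  fun i j => μ i + E i j

/-- Unsolvability of the consistency system for the mean weights: if `E` has
trivial kernel and `μ` is not in the column space of `E`, then the system
`μ = (μ·1ᵀ + E)·w` has no solution. -/
theorem consistency_system_unsolvable {N n : ℕ}
    (μ : Fin N → ℝ) (E : Matrix (Fin N) (Fin n) ℝ)
    (hker : ∀ v : Fin n → ℝ, E.mulVec v = 0 → v = 0)
    (hcol : ¬ ∃ v : Fin n → ℝ, E.mulVec v = μ) :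
    ¬ ∃ w : Fin n → ℝ, (PhiMat μ E).mulVec w = μ := by
  rintro ⟨w, hw⟩
  have key : E.mulVec w = (1 - ∑ j, w j) • μ := by
    funext i
    have h := congrFun hw i
    simp only [Matrix.mulVec, dotProduct, PhiMat, add_mul, Finset.sum_add_distrib,
      ← Finset.mul_sum] at h
    simp only [Matrix.mulVec, dotProduct, Pi.smul_apply, smul_eq_mul]
    linarith
  by_cases hs : 1 - ∑ j, w j = 0
  · rw [hs, zero_smul] at key
    have hw0 := hker w key
    simp [hw0] at hs
  · apply hcol
    refine ⟨(1 - ∑ j, w j)⁻¹ • w, ?_⟩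
    rw [Matrix.mulVec_smul, key, smul_smul, inv_mul_cancel₀ hs, one_smul]
end
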